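/- arXiv:0905.4901 — 2 statements merged into one kernel-verified Lean document; each statement's English description precedes it below -/
import Mathlib

section
/- Let M be a finitely generated graded module over a standard positively graded Noetherian ring R with (R_0, m_0) Artinian local with infinite residue field, minimally generated by homogeneous elements of degrees d_1 ≥ ... ≥ d_s. Then for any finite set P = {p_1,...,p_n} of homogeneous prime ideals of R, there exists a homogeneous element x ∈ M of degree d_1 such that for all 1 ≤ i ≤ n, μ((M/Rx)_{p_i}) = max{0, μ(M_{p_i}) − 1}. -/
open CategoryTheory

noncomputable section

variable (R₀ : Type) [CommRing R₀]
variable (R : Type) [CommRing R] [Algebra R₀ R]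
variable (𝒜 : ℕ → Submodule R₀ R) [GradedAlgebra 𝒜]

/-- The graded maximal ideal `𝔪 = 𝔪₀ ⊕ R₊` of a positively graded *local ring. -/
def gradedMaxIdeal [IsLocalRing R₀] : Ideal R :=
  Ideal.span ((algebraMap R₀ R) '' (IsLocalRing.maximalIdeal R₀)) ⊔
    (HomogeneousIdeal.irrelevant 𝒜).toIdeal

/-- The irrelevant ideal `R₊` of a positively graded ring. -/
def irrelevantIdeal : Ideal R := (HomogeneousIdeal.irrelevant 𝒜).toIdeal

/-- The graded ring `R` is standard graded over `R₀`: the degree-zero part is generated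
by `1` and the ring is generated in degree one. -/
def IsStandardGraded : Prop :=
  (𝒜 0 = Submodule.span R₀ {1}) ∧ ∀ n : ℕ, 𝒜 (n + 1) = 𝒜 1 * 𝒜 n

/-- A ℤ-grading (by additive subgroups) on an `R`-module `H`, compatible with the grading
`𝒜` of `R`: an internal direct sum decomposition `H = ⊕ ℋ_j` with `𝒜_i • ℋ_j ⊆ ℋ_{i+j}`. -/
def IsCompatibleGrading (H : Type) [AddCommGroup H] [Module R H]
    (ℋ : ℤ → AddSubgroup H) : Prop :=
  DirectSum.IsInternal ℋ ∧
    ∀ (i : ℕ) (j : ℤ) (a : R) (x : H), a ∈ 𝒜 i → x ∈ ℋ j → a • x ∈ ℋ ((i : ℤ) + j)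

/-- Local cohomology `H^i_q(M)` with support in the ideal `q`. -/
def localCoh (q : Ideal R) (i : ℕ) (M : Type) [AddCommGroup M] [Module R M] :
    ModuleCat R :=
  (localCohomology q i).obj (ModuleCat.of R M)

/-- The depth of `M` with respect to the ideal `q`. -/
def depthWrt (q : Ideal R) (M : Type) [AddCommGroup M] [Module R M] : ℕ∞ :=
  sSup {n : ℕ∞ | ∃ rs : List R, (rs.length : ℕ∞) = n ∧
    (∀ r ∈ rs, r ∈ q) ∧ RingTheory.Sequence.IsRegular M rs}

/-- The (classical) grade of an ideal. -/
def idealGrade (I : Ideal R) : ℕ∞ :=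
  sSup {n : ℕ∞ | ∃ rs : List R, (rs.length : ℕ∞) = n ∧
    (∀ r ∈ rs, r ∈ I) ∧ RingTheory.Sequence.IsRegular R rs}

/-- The height of an ideal. -/
def idealHeight (I : Ideal R) : ℕ∞ :=
  ⨅ (p : PrimeSpectrum R) (_ : I ≤ p.asIdeal), Order.height p

/-- The minimal number of generators of an ideal. -/
def idealMu (I : Ideal R) : ℕ∞ :=
  sInf {n : ℕ∞ | ∃ s : Finset R, (s.card : ℕ∞) = n ∧ Ideal.span (s : Set R) = I}

/-- The minimal number of generators of a module. -/
def moduleMu (M : Type) [AddCommGroup M] [Module R M] : ℕ∞ :=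
  sInf {n : ℕ∞ | ∃ s : Finset M, (s.card : ℕ∞) = n ∧ Submodule.span R (s : Set M) = ⊤}

/-- A Cohen-Macaulay local ring. -/
def IsCMLocalRing (A : Type) [CommRing A] [IsLocalRing A] : Prop :=
  (depthWrt A (IsLocalRing.maximalIdeal A) A : WithBot ℕ∞) = ringKrullDim A

/-- A Cohen-Macaulay ring: all localizations at maximal ideals are CM local rings. -/
def IsCMRing (A : Type) [CommRing A] : Prop :=
  ∀ (p : Ideal A), (hp : p.IsMaximal) →
    haveI := hp.isPrime
    IsCMLocalRing (Localization.AtPrime p)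

/-- The dimension of a module. -/
def moduleDim (M : Type) [AddCommGroup M] [Module R M] : WithBot ℕ∞ :=
  ringKrullDim (R ⧸ Module.annihilator R M)

/-- A module is Cohen-Macaulay w.r.t. an ideal `q` if it is zero or its depth w.r.t. `q`
equals its dimension. -/
def IsCMModuleWrt (q : Ideal R) (M : Type) [AddCommGroup M] [Module R M] : Prop :=
  Subsingleton M ∨ (depthWrt R q M : WithBot ℕ∞) = moduleDim R M

/-- `J = 𝔞 : I` is an `s`-residual intersection of `I`. -/
def IsResidualIntersection (a I J : Ideal R) (s : ℕ) : Prop :=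
  a ≤ I ∧ J = a.colon I ∧ idealMu R a ≤ s ∧ (s : ℕ∞) ≤ idealHeight R J

/-- A geometric `s`-residual intersection: moreover `ht (I + J) ≥ s + 1`. -/
def IsGeometricResidualIntersection (a I J : Ideal R) (s : ℕ) : Prop :=
  IsResidualIntersection R a I J s ∧ (s + 1 : ℕ∞) ≤ idealHeight R (I ⊔ J)

/-! ### Number of generators over a local ring -/

theorem aux_mu_le {A N : Type} [CommRing A] [AddCommGroup N] [Module A N]
    (t : Finset N) (ht : Submodule.span A (t : Set N) = ⊤) :
    moduleMu A N ≤ (t.card : ℕ∞) :=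
  sInf_le ⟨t, rfl, ht⟩

theorem aux_mu_attained {A N : Type} [CommRing A] [AddCommGroup N] [Module A N]
    [Module.Finite A N] :
    ∃ t : Finset N, (t.card : ℕ∞) = moduleMu A N ∧ Submodule.span A (t : Set N) = ⊤ := by
  obtain ⟨t, ht⟩ := (Module.Finite.fg_top : (⊤ : Submodule A N).FG)
  exact csInf_mem (s := {n : ℕ∞ | ∃ s : Finset N, (s.card : ℕ∞) = n ∧
    Submodule.span A (s : Set N) = ⊤}) ⟨_, t, rfl, ht⟩

theorem aux_mu_subsingleton {A N : Type} [CommRing A] [AddCommGroup N] [Module A N]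
    [Subsingleton N] : moduleMu A N = 0 := by
  have := aux_mu_le (A := A) (N := N) ∅ (Subsingleton.elim _ _)
  simpa using this

theorem aux_mu_quot {A N N' : Type} [CommRing A] [IsLocalRing A]
    [AddCommGroup N] [Module A N] [AddCommGroup N'] [Module A N'] [Module.Finite A N]
    (f : N →ₗ[A] N') (hf : Function.Surjective f) (y : N)
    (hker : LinearMap.ker f = Submodule.span A {y})
    (hy : y ∉ IsLocalRing.maximalIdeal A • (⊤ : Submodule A N)) :
    moduleMu A N' = moduleMu A N - 1 := by
  classical
  have : Module.Finite A N' := Module.Finite.of_surjective f hf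
  apply le_antisymm
  · obtain ⟨t, htc, ht⟩ := aux_mu_attained (A := A) (N := N)
    have hyt : y ∈ Submodule.span A (t : Set N) := ht ▸ Submodule.mem_top
    obtain ⟨a, -, ha⟩ := Submodule.mem_span_finset.1 hyt
    have hex : ∃ z ∈ t, IsUnit (a z) := by
      by_contra! hcon
      apply hy
      rw [← ha]
      exact Submodule.sum_mem _ fun z hz =>
        Submodule.smul_mem_smul ((IsLocalRing.mem_maximalIdeal _).2 (hcon z hz)) Submodule.mem_top
    obtain ⟨z, hz, hu⟩ := hex
    have hfy : f y = 0 := by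
      have : y ∈ LinearMap.ker f := hker ▸ Submodule.mem_span_singleton_self y
      exact this
    have hsp : Submodule.span A (((t.erase z).image f : Finset N') : Set N') = ⊤ := by
      have h1 : Submodule.span A ((t.image f : Finset N') : Set N') = ⊤ := by
        rw [Finset.coe_image, ← Submodule.map_span, ht, Submodule.map_top,
          LinearMap.range_eq_top.2 hf]
      rw [eq_top_iff, ← h1, Submodule.span_le]
      have hmem : ∀ w ∈ t.erase z, f w ∈
          Submodule.span A (((t.erase z).image f : Finset N') : Set N') := fun w hw =>
        Submodule.subset_span (by
          rw [Finset.coe_image]; exact ⟨w, hw, rfl⟩)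
      intro w hw
      rw [Finset.coe_image] at hw
      obtain ⟨v, hv, rfl⟩ := hw
      by_cases hvz : v = z
      · subst hvz
        have h2 : a v • f v + ∑ w ∈ t.erase v, a w • f w = 0 := by
          rw [Finset.add_sum_erase t (fun w => a w • f w) hz, ← hfy, ← ha, map_sum]
          simp
        have h3 : a v • f v ∈
            Submodule.span A (((t.erase v).image f : Finset N') : Set N') := by
          rw [eq_neg_of_add_eq_zero_left h2]
          exact Submodule.neg_mem _ (Submodule.sum_mem _ fun w hw =>
            Submodule.smul_mem _ _ (hmem w hw))
        exact (Submodule.smul_mem_iff_of_isUnit _ hu).1 h3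
      · exact hmem v (Finset.mem_erase.2 ⟨hvz, hv⟩)
    refine (aux_mu_le _ hsp).trans ?_
    rw [← htc]
    have : ((t.erase z).image f).card ≤ t.card - 1 :=
      Finset.card_image_le.trans (Finset.card_erase_of_mem hz).le
    exact_mod_cast this
  · obtain ⟨t, htc, ht⟩ := aux_mu_attained (A := A) (N := N')
    choose g hg using hf
    have hsp : Submodule.span A ((insert y (t.image g) : Finset N) : Set N) = ⊤ := by
      rw [eq_top_iff]
      intro n _
      have hn : f n ∈ Submodule.map f
          (Submodule.span A ((insert y (t.image g) : Finset N) : Set N)) := by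
        have : (⊤ : Submodule A N') ≤ Submodule.map f
            (Submodule.span A ((insert y (t.image g) : Finset N) : Set N)) := by
          rw [← ht, Submodule.span_le]
          intro w hw
          refine ⟨g w, Submodule.subset_span ?_, hg w⟩
          simp only [Finset.coe_insert, Finset.coe_image]
          exact Or.inr ⟨w, hw, rfl⟩
        exact this Submodule.mem_top
      obtain ⟨m, hm, hmn⟩ := hn
      have hk : n - m ∈ LinearMap.ker f := by simp [hmn]
      rw [hker] at hk
      have hk' : n - m ∈ Submodule.span A ((insert y (t.image g) : Finset N) : Set N) :=
        Submodule.span_mono (by simp) hk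
      simpa using Submodule.add_mem _ hk' hm
    rw [tsub_le_iff_right, ← htc]
    refine (aux_mu_le _ hsp).trans ?_
    have : (insert y (t.image g)).card ≤ t.card + 1 :=
      (Finset.card_insert_le _ _).trans (Nat.add_le_add_right Finset.card_image_le 1)
    exact_mod_cast this

/-! ### Avoidance of finitely many submodules -/

theorem aux_avoid {k₀ A N : Type} [CommRing k₀] [IsLocalRing k₀]
    [Infinite (IsLocalRing.ResidueField k₀)] [CommRing A] [Algebra k₀ A]
    [AddCommGroup N] [Module A N] (V : AddSubgroup N)
    (hV : ∀ (r : k₀) (v : N), v ∈ V → algebraMap k₀ A r • v ∈ V)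
    {ι : Type} [DecidableEq ι] (Q : ι → Submodule A N) (S : Finset ι)
    (hS : ∀ i ∈ S, ∃ v ∈ V, v ∉ Q i) :
    ∃ v ∈ V, ∀ i ∈ S, v ∉ Q i := by
  induction S using Finset.induction_on with
  | empty => exact ⟨0, V.zero_mem, by simp⟩
  | insert i S hi ih =>
    obtain ⟨y, hyV, hy⟩ := ih fun j hj => hS j (Finset.mem_insert_of_mem hj)
    obtain ⟨z, hzV, hz⟩ := hS i (Finset.mem_insert_self _ _)
    by_cases hyi : y ∈ Q i
    · let B : ι → Set (IsLocalRing.ResidueField k₀) := fun j =>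
        {c | ∃ r : k₀, IsLocalRing.residue k₀ r = c ∧ z + algebraMap k₀ A r • y ∈ Q j}
      have hB : ∀ j ∈ S, (B j).Finite := by
        intro j hj
        apply Set.Subsingleton.finite
        rintro c ⟨r, rfl, hr⟩ c' ⟨r', rfl, hr'⟩
        by_contra hne
        have hu : IsUnit (r - r') := by
          by_contra hnu
          apply hne
          rw [← sub_eq_zero, ← map_sub, IsLocalRing.residue_eq_zero_iff]
          exact (IsLocalRing.mem_maximalIdeal _).2 hnu
        have h1 : algebraMap k₀ A (r - r') • y ∈ Q j := by
          have := (Q j).sub_mem hr hr'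
          rwa [add_sub_add_left_eq_sub, ← sub_smul, ← map_sub] at this
        exact hy j hj ((Submodule.smul_mem_iff_of_isUnit _ (hu.map (algebraMap k₀ A))).1 h1)
      have hfin : (⋃ j ∈ S, B j).Finite := S.finite_toSet.biUnion hB
      obtain ⟨c, hc⟩ := hfin.exists_notMem
      obtain ⟨r, rfl⟩ := IsLocalRing.residue_surjective c
      refine ⟨z + algebraMap k₀ A r • y, V.add_mem hzV (hV r y hyV), fun j hj => ?_⟩
      rcases Finset.mem_insert.1 hj with rfl | hj
      · exact fun h => hz (by simpa using (Q j).sub_mem h ((Q j).smul_mem (algebraMap k₀ A r) hyi))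
      · exact fun h => hc (Set.mem_biUnion hj ⟨r, rfl, h⟩)
    · refine ⟨y, hyV, fun j hj => ?_⟩
      rcases Finset.mem_insert.1 hj with rfl | hj
      · exact hyi
      · exact hy j hj

/-! ### Homogeneous components -/

theorem aux_component (R₀ : Type) [CommRing R₀]
    (R : Type) [CommRing R] [Algebra R₀ R]
    (𝒜 : ℕ → Submodule R₀ R) [GradedAlgebra 𝒜]
    (M : Type) [AddCommGroup M] [Module R M]
    (ℳ : ℤ → AddSubgroup M) [DirectSum.Decomposition ℳ]
    (hsm : ∀ (i : ℕ) (j : ℤ) (a : R) (x : M), a ∈ 𝒜 i → x ∈ ℳ j → a • x ∈ ℳ ((i : ℤ) + j))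
    (d e : ℤ) (y : M) (hy : y ∈ ℳ e) (a : R) :
    ∃ b : R, (DirectSum.decompose ℳ (a • y) d : M) = b • y ∧
      (e = d → b = (DirectSum.decompose 𝒜 a 0 : R)) := by
  induction a using DirectSum.Decomposition.inductionOn 𝒜 with
  | zero => exact ⟨0, by simp, by simp⟩
  | @homogeneous i m =>
    have hm := hsm i e m y m.2 hy
    by_cases h : (i : ℤ) + e = d
    · refine ⟨m, ?_, fun hed => ?_⟩
      · rw [h] at hm
        exact DirectSum.decompose_of_mem_same ℳ hm
      · have : i = 0 := by omega
        subst this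
        exact (DirectSum.decompose_of_mem_same 𝒜 m.2).symm
    · refine ⟨0, ?_, fun hed => ?_⟩
      · rw [DirectSum.decompose_of_mem_ne ℳ hm h, zero_smul]
      · have : i ≠ 0 := by rintro rfl; simp [hed] at h
        exact (DirectSum.decompose_of_mem_ne 𝒜 m.2 this).symm
  | add m m' h h' =>
    obtain ⟨b, hb, hb'⟩ := h
    obtain ⟨c, hc, hc'⟩ := h'
    refine ⟨b + c, ?_, fun hed => ?_⟩
    · rw [add_smul, DirectSum.decompose_add, add_smul, ← hb, ← hc]; rfl
    · rw [DirectSum.decompose_add, hb' hed, hc' hed]; rfl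

theorem aux_minimal_not_mem
    (R₀ : Type) [CommRing R₀] [IsArtinianRing R₀] [IsLocalRing R₀]
    (R : Type) [CommRing R] [Algebra R₀ R]
    (𝒜 : ℕ → Submodule R₀ R) [GradedAlgebra 𝒜] (hstd : IsStandardGraded R₀ R 𝒜)
    (M : Type) [AddCommGroup M] [Module R M]
    (ℳ : ℤ → AddSubgroup M) (hℳ : IsCompatibleGrading R₀ R 𝒜 M ℳ)
    (s : ℕ) (x : Fin s → M) (dg : Fin s → ℤ)
    (hxdeg : ∀ i, x i ∈ ℳ (dg i))
    (hxspan : Submodule.span R (Set.range x) = ⊤)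
    (hxmin : (s : ℕ∞) = moduleMu R M) (p : Ideal R) [p.IsPrime]
    (hp : ∀ l ∈ 𝒜 1, l ∈ p) (k : Fin s) (u : R) (hu : u ∉ p)
    (hux : u • x k ∈ p • (⊤ : Submodule R M)) : False := by
  classical
  let _ := hℳ.1.chooseDecomposition
  have hpos : ∀ n : ℕ, ∀ l ∈ 𝒜 (n + 1), l ∈ p := by
    intro n l hl
    rw [hstd.2 n] at hl
    refine Submodule.mul_induction_on hl (fun a ha b _ => p.mul_mem_right _ (hp a ha))
      (fun a b ha hb => p.add_mem ha hb)
  have hsub : ∀ a : R, a - (DirectSum.decompose 𝒜 a 0 : R) ∈ p := by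
    intro a
    induction a using DirectSum.Decomposition.inductionOn 𝒜 with
    | zero => simp
    | @homogeneous i m =>
      rcases i with _ | i
      · rw [DirectSum.decompose_of_mem_same 𝒜 m.2]; simp
      · rw [DirectSum.decompose_of_mem_ne 𝒜 m.2 (Nat.succ_ne_zero i), sub_zero]
        exact hpos i m m.2
    | add m m' h h' =>
      rw [DirectSum.decompose_add]
      have := p.add_mem h h'
      rwa [sub_add_sub_comm] at this
  rw [← hxspan, Submodule.mem_ideal_smul_span_iff_exists_sum] at hux
  obtain ⟨a, ha, hsum⟩ := hux
  rw [Finsupp.sum_fintype _ _ (by simp)] at hsum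
  choose b hb hb' using fun (j : Fin s) (c : R) =>
    aux_component R₀ R 𝒜 M ℳ hℳ.2 (dg k) (dg j) (x j) (hxdeg j) c
  have h1 : ∑ j, b j (a j) • x j = b k u • x k := by
    rw [← hb, ← hsum, DirectSum.decompose_sum]
    simp only [← hb]
    rw [DirectSum.sum_apply, AddSubgroup.val_finsetSum]
  rw [← Finset.add_sum_erase _ _ (Finset.mem_univ k), hb' k _ rfl, hb' k _ rfl] at h1
  have h2 : ((DirectSum.decompose 𝒜 u 0 : R) - (DirectSum.decompose 𝒜 (a k) 0 : R)) • x k =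
      ∑ j ∈ Finset.univ.erase k, b j (a j) • x j := by
    rw [sub_smul, ← h1]; abel
  have h3 : (DirectSum.decompose 𝒜 u 0 : R) - (DirectSum.decompose 𝒜 (a k) 0 : R) ∉ p := by
    intro h
    apply hu
    have e1 := hsub u
    have e2 := hsub (a k)
    have e3 := ha k
    have : u = (u - (DirectSum.decompose 𝒜 u 0 : R)) +
      ((DirectSum.decompose 𝒜 u 0 : R) - (DirectSum.decompose 𝒜 (a k) 0 : R)) -
      (a k - (DirectSum.decompose 𝒜 (a k) 0 : R)) + a k := by ring
    rw [this]
    exact p.add_mem (p.sub_mem (p.add_mem e1 h) e2) e3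
  have h4 : (DirectSum.decompose 𝒜 u 0 : R) - (DirectSum.decompose 𝒜 (a k) 0 : R) ∈ 𝒜 0 :=
    (𝒜 0).sub_mem (SetLike.coe_mem _) (SetLike.coe_mem _)
  have h5 : IsUnit ((DirectSum.decompose 𝒜 u 0 : R) - (DirectSum.decompose 𝒜 (a k) 0 : R)) := by
    have h4' := h4
    generalize (DirectSum.decompose 𝒜 u 0 : R) - (DirectSum.decompose 𝒜 (a k) 0 : R) = c
      at h4' h3
    rw [hstd.1, Submodule.mem_span_singleton] at h4'
    obtain ⟨r, hr⟩ := h4'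
    rw [← Algebra.algebraMap_eq_smul_one] at hr
    rw [← hr] at h3 ⊢
    apply IsUnit.map
    by_contra hnu
    apply h3
    have hpr : (p.comap (algebraMap R₀ R)).IsPrime := Ideal.comap_isPrime _ _
    have hmax := IsArtinianRing.isMaximal_of_isPrime (p.comap (algebraMap R₀ R))
    have hmem := (IsLocalRing.mem_maximalIdeal r).2 hnu
    rw [← IsLocalRing.eq_maximalIdeal hmax] at hmem
    exact hmem
  have h6 : x k ∈ Submodule.span R (((Finset.univ.erase k).image x : Finset M) : Set M) := by
    rw [← Submodule.smul_mem_iff_of_isUnit _ h5, h2]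
    exact Submodule.sum_mem _ fun j hj => Submodule.smul_mem _ _ (Submodule.subset_span (by
      rw [Finset.coe_image]; exact ⟨j, hj, rfl⟩))
  have h7 : Submodule.span R (((Finset.univ.erase k).image x : Finset M) : Set M) = ⊤ := by
    rw [eq_top_iff, ← hxspan, Submodule.span_le]
    rintro _ ⟨j, rfl⟩
    by_cases hjk : j = k
    · subst hjk; exact h6
    · exact Submodule.subset_span (by
        rw [Finset.coe_image]; exact ⟨j, by simp [hjk], rfl⟩)
  have h8 := aux_mu_le _ h7
  rw [← hxmin] at h8
  have h9 : ((Finset.univ.erase k).image x).card ≤ s - 1 := by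
    refine Finset.card_image_le.trans ?_
    rw [Finset.card_erase_of_mem (Finset.mem_univ k)]; simp
  have h10 : s ≤ ((Finset.univ.erase k).image x).card := by exact_mod_cast h8
  have := k.2
  omega

/-! ### Localization -/

theorem aux_mu_localized {R M : Type} [CommRing R] [AddCommGroup M] [Module R M]
    [Module.Finite R M] (p : Ideal R) [p.IsPrime] (y : M)
    (hy : LocalizedModule.mkLinearMap p.primeCompl M y ∉
      IsLocalRing.maximalIdeal (Localization.AtPrime p) •
        (⊤ : Submodule (Localization.AtPrime p) (LocalizedModule p.primeCompl M))) :
    moduleMu (Localization.AtPrime p)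
        (LocalizedModule p.primeCompl (M ⧸ Submodule.span R {y})) =
      moduleMu (Localization.AtPrime p) (LocalizedModule p.primeCompl M) - 1 := by
  have hfin : Module.Finite (Localization.AtPrime p) (LocalizedModule p.primeCompl M) :=
    Module.Finite.of_isLocalizedModule p.primeCompl (LocalizedModule.mkLinearMap p.primeCompl M)
  refine aux_mu_quot (LocalizedModule.map p.primeCompl (Submodule.span R {y}).mkQ)
    (LocalizedModule.map_surjective _ _ (Submodule.mkQ_surjective _))
    (LocalizedModule.mkLinearMap p.primeCompl M y) ?_ hy
  have h := LinearMap.localized'_ker_eq_ker_localizedMap (Localization.AtPrime p) p.primeCompl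
    (LocalizedModule.mkLinearMap p.primeCompl M)
    (LocalizedModule.mkLinearMap p.primeCompl (M ⧸ Submodule.span R {y}))
    (Submodule.span R {y}).mkQ
  rw [Submodule.ker_mkQ, Submodule.localized'_span, Set.image_singleton] at h
  exact h.symm

theorem aux_mem_of_localized {R M : Type} [CommRing R] [AddCommGroup M] [Module R M]
    (p : Ideal R) [p.IsPrime] (y : M)
    (hy : LocalizedModule.mkLinearMap p.primeCompl M y ∈
      IsLocalRing.maximalIdeal (Localization.AtPrime p) •
        (⊤ : Submodule (Localization.AtPrime p) (LocalizedModule p.primeCompl M))) :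
    ∃ u : R, u ∉ p ∧ u • y ∈ p • (⊤ : Submodule R M) := by
  have h := Submodule.localized'_smul (S := Localization.AtPrime p) (p := p.primeCompl)
    (f := LocalizedModule.mkLinearMap p.primeCompl M) (M' := ⊤) p
  rw [Ideal.localized'_eq_map, Submodule.localized'_top,
    Localization.AtPrime.map_eq_maximalIdeal] at h
  rw [← h] at hy
  obtain ⟨m, hm, t, hmt⟩ := hy
  rw [IsLocalizedModule.mk'_eq_iff, ← LinearMap.map_smul_of_tower,
    IsLocalizedModule.eq_iff_exists p.primeCompl] at hmt
  obtain ⟨c, hc⟩ := hmt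
  refine ⟨c * t, (c * t).2, ?_⟩
  rw [mul_smul]
  change c • t • y ∈ _
  rw [← hc]
  exact Submodule.smul_mem _ (c : R) hm

/-- **(Lemma 4.2 / `Lprime`)** Let `R` be a standard positively graded Noetherian ring whose
base ring `(R₀, 𝔪₀)` is Artinian local with infinite residue field, and let `M` be a
finitely generated graded `R`-module minimally generated by homogeneous elements of
degrees `d_1 ≥ … ≥ d_s`.  Then for any finite set `{𝔭_1, …, 𝔭_n}` of homogeneous prime
ideals there is a homogeneous element `x ∈ M` of degree `d_1` such that
`μ((M/Rx)_{𝔭_i}) = max {0, μ(M_{𝔭_i}) - 1}` for all `i`. -/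
theorem exists_homogeneous_element_reducing_local_number_of_generators
    (R₀ : Type) [CommRing R₀] [IsArtinianRing R₀] [IsLocalRing R₀]
    [Infinite (IsLocalRing.ResidueField R₀)]
    (R : Type) [CommRing R] [IsNoetherianRing R] [Algebra R₀ R]
    (𝒜 : ℕ → Submodule R₀ R) [GradedAlgebra 𝒜] (hstd : IsStandardGraded R₀ R 𝒜)
    (M : Type) [AddCommGroup M] [Module R M] [Module.Finite R M]
    (ℳ : ℤ → AddSubgroup M) (hℳ : IsCompatibleGrading R₀ R 𝒜 M ℳ)
    -- a minimal homogeneous generating set of degrees `d_1 ≥ … ≥ d_s`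
    (s : ℕ) (hs : 0 < s) (x : Fin s → M) (dg : Fin s → ℤ)
    (hanti : ∀ i j : Fin s, i ≤ j → dg j ≤ dg i)
    (hxdeg : ∀ i, x i ∈ ℳ (dg i))
    (hxspan : Submodule.span R (Set.range x) = ⊤)
    (hxmin : (s : ℕ∞) = moduleMu R M)
    -- a finite set of homogeneous prime ideals
    (n : ℕ) (p : Fin n → PrimeSpectrum R)
    (hphom : ∀ i, (p i).asIdeal.IsHomogeneous 𝒜) :
    ∃ x₀ : M, x₀ ∈ ℳ (dg ⟨0, hs⟩) ∧
      ∀ i : Fin n,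
        moduleMu (Localization.AtPrime (p i).asIdeal)
          (LocalizedModule (p i).asIdeal.primeCompl (M ⧸ Submodule.span R {x₀})) =
        moduleMu (Localization.AtPrime (p i).asIdeal)
          (LocalizedModule (p i).asIdeal.primeCompl M) - 1 := by
  classical
  let Q : Fin n → Submodule R M := fun i =>
    Submodule.comap (LocalizedModule.mkLinearMap (p i).asIdeal.primeCompl M)
      ((IsLocalRing.maximalIdeal (Localization.AtPrime (p i).asIdeal) •
        (⊤ : Submodule (Localization.AtPrime (p i).asIdeal)
          (LocalizedModule (p i).asIdeal.primeCompl M))).restrictScalars R)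
  have hdeg0 : ∀ r : R₀, algebraMap R₀ R r ∈ 𝒜 0 := fun r => by
    rw [hstd.1, Algebra.algebraMap_eq_smul_one]
    exact Submodule.smul_mem _ _ (Submodule.mem_span_singleton_self 1)
  obtain ⟨v, hv, hvQ⟩ := aux_avoid (k₀ := R₀) (A := R) (ℳ (dg ⟨0, hs⟩))
    (fun r v hv => by simpa using hℳ.2 0 _ _ v (hdeg0 r) hv) Q
    (Finset.univ.filter fun i =>
      ¬ Subsingleton (LocalizedModule (p i).asIdeal.primeCompl M)) (by
    intro i hi
    have hi : ¬ Subsingleton (LocalizedModule (p i).asIdeal.primeCompl M) :=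
      (Finset.mem_filter.1 hi).2
    by_contra! hcon
    by_cases hp : ∀ l ∈ 𝒜 1, l ∈ (p i).asIdeal
    · obtain ⟨u, hu, hux⟩ := aux_mem_of_localized (p i).asIdeal (x ⟨0, hs⟩)
        (hcon _ (hxdeg ⟨0, hs⟩))
      exact aux_minimal_not_mem R₀ R 𝒜 hstd M ℳ hℳ s x dg hxdeg hxspan hxmin
        (p i).asIdeal hp ⟨0, hs⟩ u hu hux
    · push Not at hp
      obtain ⟨l, hl, hlp⟩ := hp
      apply hi
      have hfin : Module.Finite (Localization.AtPrime (p i).asIdeal)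
          (LocalizedModule (p i).asIdeal.primeCompl M) :=
        Module.Finite.of_isLocalizedModule (p i).asIdeal.primeCompl
          (LocalizedModule.mkLinearMap (p i).asIdeal.primeCompl M)
      have hx : ∀ j, x j ∈ Q i := by
        intro j
        have hd : dg j ≤ dg ⟨0, hs⟩ := hanti _ _ (Nat.zero_le _)
        have hlpow : l ^ (dg ⟨0, hs⟩ - dg j).toNat ∈ 𝒜 (dg ⟨0, hs⟩ - dg j).toNat := by
          simpa using SetLike.pow_mem_graded (dg ⟨0, hs⟩ - dg j).toNat hl
        have h1 := hℳ.2 _ _ _ _ hlpow (hxdeg j)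
        rw [Int.toNat_of_nonneg (by omega), sub_add_cancel] at h1
        have h2 := hcon _ h1
        have hu : IsUnit (algebraMap R (Localization.AtPrime (p i).asIdeal)
            (l ^ (dg ⟨0, hs⟩ - dg j).toNat)) :=
          IsLocalization.map_units _ (⟨_, fun h =>
            hlp ((p i).2.mem_of_pow_mem _ h)⟩ : (p i).asIdeal.primeCompl)
        simp only [Q, Submodule.mem_comap, Submodule.restrictScalars_mem, map_smul] at h2 ⊢
        rw [← algebraMap_smul (Localization.AtPrime (p i).asIdeal) (l ^ _)] at h2
        exact (Submodule.smul_mem_iff_of_isUnit _ hu).1 h2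
      have hspan := span_eq_top_of_isLocalizedModule
        (Localization.AtPrime (p i).asIdeal) (p i).asIdeal.primeCompl
        (LocalizedModule.mkLinearMap (p i).asIdeal.primeCompl M) hxspan
      have htop : (⊤ : Submodule (Localization.AtPrime (p i).asIdeal)
          (LocalizedModule (p i).asIdeal.primeCompl M)) ≤
          IsLocalRing.maximalIdeal (Localization.AtPrime (p i).asIdeal) • ⊤ := by
        conv_lhs => rw [← hspan]
        rw [Submodule.span_le]
        rintro _ ⟨_, ⟨j, rfl⟩, rfl⟩
        exact hx j
      have hbot := Submodule.eq_bot_of_le_smul_of_le_jacobson_bot _ _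
        Module.Finite.fg_top htop (IsLocalRing.maximalIdeal_le_jacobson _)
      exact (Submodule.subsingleton_iff _).1 (subsingleton_of_bot_eq_top hbot.symm))
  refine ⟨v, hv, fun i => ?_⟩
  by_cases hi : Subsingleton (LocalizedModule (p i).asIdeal.primeCompl M)
  · have hsub : Subsingleton (LocalizedModule (p i).asIdeal.primeCompl
        (M ⧸ Submodule.span R {v})) :=
      (LocalizedModule.map_surjective (p i).asIdeal.primeCompl _
        (Submodule.mkQ_surjective (Submodule.span R {v}))).subsingleton
    rw [aux_mu_subsingleton, aux_mu_subsingleton]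
    rfl
  · exact aux_mu_localized (p i).asIdeal v (hvQ i (by simpa using hi))

end
end

section
/- Let R = ⊕_{i≥0} R_i be a standard positively graded Noetherian ring with (R_0, m_0) Artinian local with infinite residue field, and let I be a homogeneous ideal of height g satisfying the condition G_s. If J = a : I is an s-residual intersection of I with a homogeneous, then a has an A-N homogeneous generating set, i.e., there exists a homogeneous generating set a_1,...,a_s of a such that (a_1,...,a_i) : I is an i-residual intersection of I for all g ≤ i ≤ s. -/
open CategoryTheory

noncomputable section

variable (R₀ : Type) [CommRing R₀]
variable (R : Type) [CommRing R] [Algebra R₀ R]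
variable (𝒜 : ℕ → Submodule R₀ R) [GradedAlgebra 𝒜]

section ANHelpers

/-- `I/b` is generated by at most `k` elements locally at `p`. -/
def LocGen {A : Type} [CommRing A] (p I b : Ideal A) (k : ℕ) : Prop :=
  ∃ x : Finset A, x.card ≤ k ∧ (x : Set A) ⊆ I ∧ ∃ c, c ∉ p ∧ ∀ y ∈ I, c * y ∈ Ideal.span (x : Set A) ⊔ b

/-- The ideal defining the locus where `LocGen` fails. -/
def locIdeal {A : Type} [CommRing A] (I b : Ideal A) (k : ℕ) : Ideal A :=
  ⨆ x : {x : Finset A // x.card ≤ k ∧ (x : Set A) ⊆ I}, (Ideal.span (x.1 : Set A) ⊔ b).colon (I : Set A)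

lemma locGen_iff {A : Type} [CommRing A] (p I b : Ideal A) (k : ℕ) :
    LocGen p I b k ↔ ¬ locIdeal I b k ≤ p := by
  unfold locIdeal LocGen
  rw [iSup_le_iff]
  push Not
  constructor
  · rintro ⟨x, h1, h2, c, hc, h⟩
    refine ⟨⟨x, h1, h2⟩, fun hle => hc (hle ?_)⟩
    rw [Submodule.mem_colon]
    exact h
  · rintro ⟨⟨x, h1, h2⟩, h⟩
    obtain ⟨c, hc, hcp⟩ := Set.not_subset.1 h
    exact ⟨x, h1, h2, c, hcp, fun y hy => Submodule.mem_colon.1 hc y hy⟩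

lemma LocGen.mono {A : Type} [CommRing A] {p q I b b' : Ideal A} {k l : ℕ} (h : LocGen p I b k)
    (hkl : k ≤ l) (hb : b ≤ b') (hqp : q ≤ p) : LocGen q I b' l := by
  obtain ⟨x, h1, h2, c, hc, h⟩ := h
  exact ⟨x, h1.trans hkl, h2, c, fun hq => hc (hqp hq), fun y hy => sup_le_sup_left hb _ (h y hy)⟩

lemma locGen_zero {A : Type} [CommRing A] {p I b : Ideal A} :
    LocGen p I b 0 ↔ ¬ b.colon (I : Set A) ≤ p := by
  constructor
  · rintro ⟨x, h1, h2, c, hc, h⟩ hle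
    obtain rfl : x = ∅ := by simpa using h1
    exact hc (hle (Submodule.mem_colon.2 fun y hy => by simpa using h y hy))
  · intro h
    obtain ⟨c, hc, hcp⟩ := Set.not_subset.1 h
    exact ⟨∅, by simp, by simp, c, hcp, fun y hy => by
      simpa using Submodule.mem_colon.1 hc y hy⟩

/-- Elements of `A` that lie in `p I + b` locally at `p`. -/
def locSat {A : Type} [CommRing A] (p I b : Ideal A) (hp : p.IsPrime) : Ideal A where
  carrier := {v | ∃ c, c ∉ p ∧ c * v ∈ p * I ⊔ b}
  zero_mem' := ⟨1, fun h => hp.ne_top ((Ideal.eq_top_iff_one _).2 h), by simp⟩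
  add_mem' := by
    rintro v w ⟨c, hc, h⟩ ⟨d, hd, h'⟩
    refine ⟨c * d, fun hh => (hp.mem_or_mem hh).elim hc hd, ?_⟩
    have : c * d * (v + w) = d * (c * v) + c * (d * w) := by ring
    rw [this]
    exact add_mem (Ideal.mul_mem_left _ _ h) (Ideal.mul_mem_left _ _ h')
  smul_mem' := by
    rintro r v ⟨c, hc, h⟩
    refine ⟨c, hc, ?_⟩
    have : c * (r • v) = r * (c * v) := by simp only [smul_eq_mul]; ring
    rw [this]
    exact Ideal.mul_mem_left _ _ h

lemma locSat_of_mul {A : Type} [CommRing A] {p I b : Ideal A} {hp : p.IsPrime} {r v : A} (hr : r ∉ p)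
    (h : r * v ∈ locSat p I b hp) : v ∈ locSat p I b hp := by
  obtain ⟨c, hc, h⟩ := h
  exact ⟨c * r, fun hh => (hp.mem_or_mem hh).elim hc hr, by rwa [mul_assoc]⟩

lemma LocGen.exchange {A : Type} [CommRing A] {p I b : Ideal A} (hp : p.IsPrime) {k : ℕ}
    (h : LocGen p I b (k + 1)) {v : A} (hv : v ∈ I) (hvN : v ∉ locSat p I b hp) :
    LocGen p I (b ⊔ Ideal.span {v}) k := by
  classical
  obtain ⟨x, h1, h2, c, hc, h⟩ := h
  obtain ⟨y, hy, β, hβ, hyβ⟩ := Submodule.mem_sup.1 (h v hv)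
  obtain ⟨r, -, hr⟩ := Submodule.mem_span_finset.1 hy
  have hex : ∃ j ∈ x, r j ∉ p := by
    by_contra hcon
    push Not at hcon
    refine hvN ⟨c, hc, ?_⟩
    rw [← hyβ, ← hr]
    refine add_mem (Ideal.mem_sup_left (sum_mem fun j hj => ?_)) (Ideal.mem_sup_right hβ)
    exact Ideal.mul_mem_mul (hcon j hj) (h2 hj)
  obtain ⟨j, hj, hrj⟩ := hex
  set K := Ideal.span ((x.erase j : Finset A) : Set A) ⊔ (b ⊔ Ideal.span {v}) with hK
  have hxK : ∀ l ∈ x, l ≠ j → l ∈ K := fun l hl hlj =>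
    Ideal.mem_sup_left (Ideal.subset_span (by simp [hl, hlj]))
  have hbK : b ≤ K := le_sup_left.trans le_sup_right
  have hvK : v ∈ K := Ideal.mem_sup_right (Ideal.mem_sup_right (Ideal.subset_span rfl))
  have hjK : r j * j ∈ K := by
    have e : r j * j = c * v - β - ∑ l ∈ x.erase j, r l * l := by
      rw [← hyβ, ← hr, ← Finset.add_sum_erase x _ hj]
      simp
    rw [e]
    refine sub_mem (sub_mem (Ideal.mul_mem_left _ _ hvK) (hbK hβ)) (sum_mem fun l hl => ?_)
    rw [Finset.mem_erase] at hl
    exact Ideal.mul_mem_left _ _ (hxK l hl.2 hl.1)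
  refine ⟨x.erase j, by rw [Finset.card_erase_of_mem hj]; omega, fun l hl => h2 ?_, r j * c,
    fun hh => (hp.mem_or_mem hh).elim hrj hc, fun y hy => ?_⟩
  · exact Finset.mem_of_mem_erase hl
  · rw [mul_assoc]
    obtain ⟨z, hz, β', hβ', hzβ⟩ := Submodule.mem_sup.1 (h y hy)
    rw [← hzβ, mul_add]
    refine add_mem ?_ (hbK (Ideal.mul_mem_left _ _ hβ'))
    refine Submodule.span_induction (p := fun z _ => r j * z ∈ K) ?_ (by simp) ?_ ?_ hz
    · intro l hl
      by_cases e : l = j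
      · rw [e]; exact hjK
      · exact Ideal.mul_mem_left _ _ (hxK l hl e)
    · intro a b _ _ h1 h2
      rw [mul_add]; exact add_mem h1 h2
    · intro a b _ h1
      have : r j * (a • b) = a * (r j * b) := by simp only [smul_eq_mul]; ring
      rw [this]
      exact Ideal.mul_mem_left _ _ h1

/-- A common denominator. -/
lemma exists_common_denom {A : Type} [CommRing A] {p I K : Ideal A} (hp : p.IsPrime) (hI : I.FG)
    (h : ∀ y ∈ I, ∃ c, c ∉ p ∧ c * y ∈ K) : ∃ c, c ∉ p ∧ ∀ y ∈ I, c * y ∈ K := by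
  classical
  obtain ⟨T, rfl⟩ := hI
  choose! c hc hcK using fun y (hy : y ∈ T) => h y (Ideal.subset_span hy)
  refine ⟨∏ y ∈ T, c y, fun hh => ?_, fun y hy => ?_⟩
  · obtain ⟨y, hy, hyp⟩ := (Ideal.IsPrime.prod_mem_iff).1 hh
    exact hc y hy hyp
  · refine Submodule.span_induction (p := fun z _ => (∏ y ∈ T, c y) * z ∈ K) ?_ (by simp) ?_ ?_ hy
    · intro l hl
      rw [← Finset.prod_erase_mul T c hl, mul_assoc]
      exact Ideal.mul_mem_left _ _ (hcK l hl)
    · intro a b _ _ h1 h2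
      rw [mul_add]; exact add_mem h1 h2
    · intro a b _ h1
      rw [smul_eq_mul, mul_left_comm]
      exact Ideal.mul_mem_left _ _ h1

/-- Local Nakayama lemma. -/
lemma locGen_zero_of_le_locSat {A : Type} [CommRing A] {p I b : Ideal A} (hp : p.IsPrime) (hI : I.FG)
    (h : I ≤ locSat p I b hp) : LocGen p I b 0 := by
  obtain ⟨c, hc, hcI⟩ := exists_common_denom hp hI (K := p * I ⊔ b) (fun y hy => h hy)
  let B : Submodule A I := Submodule.comap I.subtype b
  have : Module.Finite A I := Module.Finite.iff_fg.2 hI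
  let M := I ⧸ B
  let f : Module.End A M := algebraMap A (Module.End A M) c
  have hrange : LinearMap.range f ≤ p • ⊤ := by
    rintro _ ⟨m, rfl⟩
    obtain ⟨y, rfl⟩ := Submodule.mkQ_surjective B m
    obtain ⟨z, hz, β, hβ, e⟩ := Submodule.mem_sup.1 (hcI y.1 y.2)
    have hz' : z ∈ Submodule.map I.subtype (p • (⊤ : Submodule A I)) := by
      rw [Submodule.map_smul'']
      simpa using hz
    obtain ⟨z', hz', rfl⟩ := hz'
    have : f (B.mkQ y) = B.mkQ z' := by
      change c • B.mkQ y = _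
      rw [← map_smul, ← sub_eq_zero, ← map_sub]
      simp only [Submodule.mkQ_apply, Submodule.Quotient.mk_eq_zero]
      change c * y.1 - (z' : A) ∈ b
      rw [← e]
      simpa using hβ
    rw [this]
    have : B.mkQ z' ∈ Submodule.map B.mkQ (p • ⊤) := ⟨z', hz', rfl⟩
    rw [Submodule.map_smul''] at this
    exact (smul_mono_right p le_top : p • _ ≤ p • (⊤ : Submodule A M)) this
  obtain ⟨P, hmon, -, hcoef, hP⟩ :=
    LinearMap.exists_monic_and_natDegree_eq_and_coeff_mem_pow_and_aeval_eq_zero A f p hrange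
  refine ⟨∅, by simp, by simp, P.eval c, fun hh => ?_, fun y hy => ?_⟩
  · rw [Polynomial.eval_eq_sum_range, Finset.sum_range_succ, hmon.coeff_natDegree, one_mul] at hh
    have h2 : ∑ i ∈ Finset.range P.natDegree, P.coeff i * c ^ i ∈ p := by
      refine sum_mem fun i hi => Ideal.mul_mem_right _ _ ?_
      refine Ideal.pow_le_self ?_ (hcoef i)
      have := Finset.mem_range.1 hi
      omega
    exact hc (hp.mem_of_pow_mem _ (((Submodule.add_mem_iff_right _ h2).1 hh)))
  · have h3 : (Polynomial.aeval f P) (B.mkQ ⟨y, hy⟩) = 0 := by rw [hP]; rfl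
    rw [Polynomial.aeval_algebraMap_apply, Module.algebraMap_end_apply, ← map_smul] at h3
    have h4 := (Submodule.Quotient.mk_eq_zero B).1 h3
    have h5 : P.eval c * y ∈ b := h4
    exact Ideal.mem_sup_right h5

/-- Coset avoidance over a local ring with infinite residue field. -/
lemma coset_avoid {K M : Type} [CommRing K] [IsLocalRing K] [Infinite (IsLocalRing.ResidueField K)]
    [AddCommGroup M] [Module K M] {ι : Type} (N : ι → Submodule K M) (f : M) (W : Submodule K M)
    (S : Finset ι) (h : ∀ q ∈ S, ∃ w ∈ W, f + w ∉ N q) : ∃ w ∈ W, ∀ q ∈ S, f + w ∉ N q := by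
  classical
  induction S using Finset.induction_on with
  | empty => exact ⟨0, zero_mem _, by simp⟩
  | insert p S hpS ih =>
    obtain ⟨w, hw, hwS⟩ := ih fun q hq => h q (Finset.mem_insert_of_mem hq)
    obtain ⟨w', hw', hwp⟩ := h p (Finset.mem_insert_self _ _)
    let bad : ι → Set (IsLocalRing.ResidueField K) := fun q =>
      {τ | ∃ t : K, IsLocalRing.residue K t = τ ∧ f + (w + t • (w' - w)) ∈ N q}
    have hbad : ∀ q ∈ insert p S, (bad q).Subsingleton := by
      rintro q hq _ ⟨t, rfl, ht⟩ _ ⟨u, rfl, hu⟩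
      by_contra hne
      have hunit : IsUnit (t - u) := by
        rw [← IsLocalRing.residue_ne_zero_iff_isUnit, map_sub]
        exact sub_ne_zero.2 hne
      have h1 : (t - u) • (w' - w) ∈ N q := by
        have := sub_mem ht hu
        convert this using 1
        rw [sub_smul]; abel
      have h2 : w' - w ∈ N q := (Submodule.smul_mem_iff_of_isUnit _ hunit).1 h1
      have h3 : f + w ∈ N q := by
        have := sub_mem ht ((N q).smul_mem t h2)
        convert this using 1
        abel
      have h4 : f + w' ∈ N q := by
        have := add_mem h3 h2
        convert this using 1
        abel
      rcases Finset.mem_insert.1 hq with rfl | hq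
      · exact hwp h4
      · exact hwS q hq h3
    have hfin : (⋃ q ∈ insert p S, bad q).Finite :=
      Set.Finite.biUnion (Finset.finite_toSet _) fun q hq => (hbad q hq).finite
    obtain ⟨τ, hτ⟩ := hfin.exists_notMem
    obtain ⟨t, rfl⟩ := IsLocalRing.residue_surjective τ
    refine ⟨w + t • (w' - w), add_mem hw (W.smul_mem _ (sub_mem hw' hw)), fun q hq hmem => hτ ?_⟩
    exact Set.mem_biUnion (x := q) hq ⟨t, rfl, hmem⟩

/-- Steinitz exchange: a generating set contains a small subset generating locally. -/
lemma exists_small_subset {A : Type} [CommRing A] {p I a : Ideal A} (hp : p.IsPrime) (hI : I.FG)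
    (haI : a ≤ I) (ha : LocGen p I a 0) (F : Set A) (hF : Ideal.span F = a) (k : ℕ) :
    ∀ b : Ideal A, LocGen p I b k → ∃ F' : Finset A, (F' : Set A) ⊆ F ∧ F'.card ≤ k ∧
      LocGen p I (b ⊔ Ideal.span (F' : Set A)) 0 := by
  classical
  induction k with
  | zero => intro b hb; exact ⟨∅, by simp, by simp, by simpa using hb⟩
  | succ k ih =>
    intro b hb
    by_cases h0 : LocGen p I b 0
    · exact ⟨∅, by simp, by simp, by simpa using h0⟩
    have : ∃ v ∈ F, v ∉ locSat p I b hp := by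
      by_contra hcon
      push Not at hcon
      apply h0
      apply locGen_zero_of_le_locSat hp hI
      have hle : a ≤ locSat p I b hp := by rw [← hF]; exact Ideal.span_le.2 hcon
      obtain ⟨x, h1, -, c, hc, h⟩ := ha
      obtain rfl : x = ∅ := by simpa using h1
      intro y hy
      exact locSat_of_mul hc (hle (by simpa using h y hy))
    obtain ⟨v, hvF, hv⟩ := this
    obtain ⟨F', h1, h2, h3⟩ := ih _ (hb.exchange hp (haI (hF ▸ Ideal.subset_span hvF)) hv)
    refine ⟨insert v F', ?_, (Finset.card_insert_le _ _).trans (by omega), ?_⟩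
    · rw [Finset.coe_insert]; exact Set.insert_subset hvF h1
    · rw [Finset.coe_insert, Ideal.span_insert, ← sup_assoc]; exact h3

lemma not_irrelevant_le {K A : Type} [CommRing K] [CommRing A] [Algebra K A]
    (𝒜 : ℕ → Submodule K A) [GradedAlgebra 𝒜] (hstd : IsStandardGraded K A 𝒜)
    {p : Ideal A} (hp : p.IsPrime) (h : ¬ irrelevantIdeal K A 𝒜 ≤ p) (k : ℕ) :
    ∃ r ∈ 𝒜 k, r ∉ p := by
  have h1 : ∃ r ∈ 𝒜 1, r ∉ p := by
    by_contra hcon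
    push Not at hcon
    apply h
    unfold irrelevantIdeal
    rw [HomogeneousIdeal.irrelevant_eq_span, Ideal.span_le]
    intro x hx
    simp only [Set.mem_iUnion] at hx
    obtain ⟨i, hi, hx⟩ := hx
    obtain ⟨n, rfl⟩ := Nat.exists_eq_succ_of_ne_zero (ne_of_gt hi)
    have hx' : x ∈ 𝒜 1 * 𝒜 n := by rw [← hstd.2 n]; exact hx
    refine Submodule.mul_induction_on (C := fun z => z ∈ p) hx' ?_ ?_
    · intro m hm n _; exact Ideal.mul_mem_right _ _ (hcon m hm)
    · intro x y hx hy; exact add_mem hx hy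
  obtain ⟨r, hr, hrp⟩ := h1
  refine ⟨r ^ k, ?_, fun hh => hrp (hp.mem_of_pow_mem _ hh)⟩
  have := SetLike.pow_mem_graded k hr
  simpa using this

lemma LocGen.of_mul_mem {A : Type} [CommRing A] {p I a N : Ideal A} (ha : LocGen p I a 0)
    (haN : a ≤ N) (hN : ∀ r v, r ∉ p → r * v ∈ N → v ∈ N) : I ≤ N := by
  obtain ⟨x, h1, -, c, hc, h⟩ := ha
  obtain rfl : x = ∅ := by simpa using h1
  intro y hy
  exact hN c y hc (haN (by simpa using h y hy))

/-- The inductive hypothesis. -/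
def ANInv {K A : Type} [CommRing K] [CommRing A] [Algebra K A]
    (𝒜 : ℕ → Submodule K A) [GradedAlgebra 𝒜] (I a : Ideal A) (s : ℕ) (f : ℕ → A) (i : ℕ)
    (b : Ideal A) : Prop :=
  b ⊔ Ideal.span (f '' Set.Ici i) = a ∧
    ∀ p : PrimeSpectrum A, ¬ irrelevantIdeal K A 𝒜 ≤ p.asIdeal → ∀ h : ℕ, Order.height p = h →
      h < s → LocGen p.asIdeal I b (h + 1 - i)

set_option maxHeartbeats 800000 in
lemma ANInv.step {K A : Type} [CommRing K] [IsLocalRing K] [Infinite (IsLocalRing.ResidueField K)]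
    [CommRing A] [IsNoetherianRing A] [Algebra K A]
    (𝒜 : ℕ → Submodule K A) [GradedAlgebra 𝒜] (hstd : IsStandardGraded K A 𝒜)
    {I a : Ideal A} (haI : a ≤ I) {s : ℕ}
    (hJ : ∀ p : PrimeSpectrum A, Order.height p < s → LocGen p.asIdeal I a 0)
    {f : ℕ → A} {d : ℕ → ℕ} (hd : Antitone d) (hf : ∀ j, f j ∈ 𝒜 (d j)) {i : ℕ} {b : Ideal A}
    (hinv : ANInv 𝒜 I a s f i b) :
    ∃ v ∈ 𝒜 (d i), ANInv 𝒜 I a s f (i + 1) (b ⊔ Ideal.span {v}) := by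
  classical
  obtain ⟨hgen, hP⟩ := hinv
  have hIfg : I.FG := IsNoetherian.noetherian I
  let W : Submodule K A := Submodule.span K {y | ∃ j, i < j ∧ ∃ r ∈ 𝒜 (d i - d j), y = r * f j}
  have hW1 : W ≤ 𝒜 (d i) := by
    refine Submodule.span_le.2 ?_
    rintro _ ⟨j, hij, r, hr, rfl⟩
    have := SetLike.mul_mem_graded hr (hf j)
    rwa [Nat.sub_add_cancel (hd hij.le)] at this
  have hW2 : ∀ w ∈ W, w ∈ Ideal.span (f '' Set.Ici (i + 1)) := by
    have : W ≤ (Ideal.span (f '' Set.Ici (i + 1))).restrictScalars K := by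
      refine Submodule.span_le.2 ?_
      rintro _ ⟨j, hij, r, hr, rfl⟩
      exact Ideal.mul_mem_left _ _ (Ideal.subset_span ⟨j, hij, rfl⟩)
    exact this
  have hsplit : Ideal.span (f '' Set.Ici i) = Ideal.span {f i} ⊔ Ideal.span (f '' Set.Ici (i + 1)) := by
    rw [← Ideal.span_union]
    congr 1
    ext x
    simp only [Set.mem_image, Set.mem_Ici, Set.mem_union, Set.mem_singleton_iff]
    constructor
    · rintro ⟨j, hj, rfl⟩
      rcases Nat.eq_or_lt_of_le hj with rfl | hj
      · exact Or.inl rfl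
      · exact Or.inr ⟨j, hj, rfl⟩
    · rintro (rfl | ⟨j, hj, rfl⟩)
      · exact ⟨i, le_rfl, rfl⟩
      · exact ⟨j, by omega, rfl⟩
  let Λ : Set (PrimeSpectrum A) := {p | (∃ k ∈ Set.Iic s, p.asIdeal ∈ (locIdeal I b k).minimalPrimes) ∧
    ¬ irrelevantIdeal K A 𝒜 ≤ p.asIdeal ∧ LocGen p.asIdeal I a 0}
  have hΛ : Λ.Finite := by
    have h1 : (⋃ k ∈ Set.Iic s, (locIdeal I b k).minimalPrimes).Finite :=
      Set.Finite.biUnion (Set.finite_Iic s) fun k _ =>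
        Ideal.finite_minimalPrimes_of_isNoetherianRing A _
    refine (h1.preimage (f := PrimeSpectrum.asIdeal)
      (fun p _ q _ h => PrimeSpectrum.ext h)).subset ?_
    rintro p ⟨⟨k, hk, hkp⟩, -⟩
    exact Set.mem_biUnion hk hkp
  let N : PrimeSpectrum A → Submodule K A := fun p =>
    (locSat p.asIdeal I b p.isPrime).restrictScalars K
  have hbN : ∀ p : PrimeSpectrum A, b ≤ locSat p.asIdeal I b p.isPrime := fun p x hx =>
    ⟨1, fun h => p.isPrime.ne_top ((Ideal.eq_top_iff_one _).2 h), by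
      rw [one_mul]; exact Ideal.mem_sup_right hx⟩
  obtain ⟨w, hw, hwN⟩ := coset_avoid N (f i) W hΛ.toFinset (by
    intro p hp
    rw [Set.Finite.mem_toFinset] at hp
    obtain ⟨⟨k, hk, hkp⟩, hirr, ha⟩ := hp
    have hn0 : ¬ LocGen p.asIdeal I b 0 := by
      intro h0
      exact (locGen_iff _ _ _ _).1 (h0.mono (Nat.zero_le k) le_rfl le_rfl) hkp.1.2
    have hex : ∃ j, i ≤ j ∧ f j ∉ locSat p.asIdeal I b p.isPrime := by
      by_contra hcon
      push Not at hcon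
      refine hn0 (locGen_zero_of_le_locSat p.isPrime hIfg (ha.of_mul_mem ?_ fun r v => locSat_of_mul))
      rw [← hgen]
      refine sup_le (hbN p) (Ideal.span_le.2 ?_)
      rintro _ ⟨j, hj, rfl⟩
      exact hcon j hj
    by_cases hfi : f i ∈ locSat p.asIdeal I b p.isPrime
    · obtain ⟨j, hij, hfj⟩ := hex
      have hij' : i < j := lt_of_le_of_ne hij (by rintro rfl; exact hfj hfi)
      obtain ⟨r, hr, hrp⟩ := not_irrelevant_le 𝒜 hstd p.isPrime hirr (d i - d j)
      refine ⟨r * f j, Submodule.subset_span ⟨j, hij', r, hr, rfl⟩, fun hmem => ?_⟩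
      have hmem' : f i + r * f j ∈ locSat p.asIdeal I b p.isPrime := hmem
      exact hfj (locSat_of_mul hrp ((Submodule.add_mem_iff_right _ hfi).1 hmem'))
    · exact ⟨0, zero_mem _, fun hmem => hfi (by simpa using (show f i + 0 ∈ locSat p.asIdeal I b p.isPrime from hmem))⟩)
  have hgen' : b ⊔ Ideal.span {f i + w} ⊔ Ideal.span (f '' Set.Ici (i + 1)) = a := by
    rw [← hgen, hsplit, sup_assoc]
    congr 1
    apply le_antisymm
    · refine sup_le ((Ideal.span_singleton_le_iff_mem _).2 ?_) le_sup_right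
      exact add_mem (Ideal.mem_sup_left (Ideal.subset_span rfl)) (Ideal.mem_sup_right (hW2 w hw))
    · refine sup_le ((Ideal.span_singleton_le_iff_mem _).2 ?_) le_sup_right
      have h1 : f i + w ∈ Ideal.span {f i + w} ⊔ Ideal.span (f '' Set.Ici (i + 1)) :=
        Ideal.mem_sup_left (Ideal.mem_span_singleton_self _)
      have h2 : w ∈ Ideal.span {f i + w} ⊔ Ideal.span (f '' Set.Ici (i + 1)) :=
        Ideal.mem_sup_right (hW2 w hw)
      exact (Submodule.add_mem_iff_left _ h2).1 h1
  have hva : f i + w ∈ a := by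
    rw [← hgen']
    exact Ideal.mem_sup_left (Ideal.mem_sup_right (Ideal.subset_span rfl))
  refine ⟨f i + w, add_mem (hf i) (hW1 hw), hgen', ?_⟩
  intro p hirr h hph hhs
  have hPp := hP p hirr h hph hhs
  by_cases hle : LocGen p.asIdeal I b (h + 1 - (i + 1))
  · exact hle.mono le_rfl le_sup_left le_rfl
  have hk : h + 1 - i = (h + 1 - (i + 1)) + 1 := by
    by_contra hne
    have : h + 1 - i = h + 1 - (i + 1) := by omega
    exact hle (this ▸ hPp)
  have hle' : locIdeal I b (h + 1 - (i + 1)) ≤ p.asIdeal := by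
    by_contra hcon
    exact hle ((locGen_iff _ _ _ _).2 hcon)
  have hprime := p.isPrime
  obtain ⟨q, hq, hqp⟩ := Ideal.exists_minimalPrimes_le hle'
  have hqeq : q = p.asIdeal := by
    by_contra hne
    let q' : PrimeSpectrum A := ⟨q, hq.1.1⟩
    have hlt : q' < p := lt_of_le_of_ne hqp (fun e => hne (congrArg PrimeSpectrum.asIdeal e))
    have hpfin : Order.height p < ⊤ := by rw [hph]; exact ENat.natCast_lt_top _
    have hfin : Order.height q' < ⊤ := lt_of_le_of_lt (Order.height_mono hlt.le) hpfin
    have hlt' := Order.height_strictMono hlt hfin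
    obtain ⟨h', hh'⟩ := ENat.ne_top_iff_exists.1 hfin.ne
    rw [← hh', hph] at hlt'
    have hlt'' : h' < h := by exact_mod_cast hlt'
    have := hP q' (fun hc => hirr (hc.trans hqp)) h' hh'.symm (by omega)
    exact (locGen_iff _ _ _ _).1 (this.mono (l := h + 1 - (i + 1)) (by omega) le_rfl le_rfl) hq.1.2
  have hpΛ : p ∈ hΛ.toFinset := by
    rw [Set.Finite.mem_toFinset]
    refine ⟨⟨_, ?_, hqeq ▸ hq⟩, hirr, hJ p (by rw [hph]; exact_mod_cast hhs)⟩
    simp only [Set.mem_Iic]; omega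
  rw [hk] at hPp
  exact hPp.exchange p.isPrime (haI hva) (hwN p hpΛ)

lemma exists_AN_seq {K A : Type} [CommRing K] [IsLocalRing K]
    [Infinite (IsLocalRing.ResidueField K)]
    [CommRing A] [IsNoetherianRing A] [Algebra K A]
    (𝒜 : ℕ → Submodule K A) [GradedAlgebra 𝒜] (hstd : IsStandardGraded K A 𝒜)
    {I a : Ideal A} (haI : a ≤ I) {s : ℕ}
    (hJ : ∀ p : PrimeSpectrum A, Order.height p < s → LocGen p.asIdeal I a 0)
    {f : ℕ → A} {d : ℕ → ℕ} (hd : Antitone d) (hf : ∀ j, f j ∈ 𝒜 (d j))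
    (h0 : ANInv 𝒜 I a s f 0 ⊥) (m : ℕ) :
    ∃ v : ℕ → A, (∀ i < m, v i ∈ 𝒜 (d i)) ∧
      ∀ i ≤ m, ANInv 𝒜 I a s f i (Ideal.span (v '' Set.Iio i)) := by
  induction m with
  | zero =>
    refine ⟨0, by simp, fun i hi => ?_⟩
    obtain rfl : i = 0 := by omega
    simpa using h0
  | succ m ih =>
    obtain ⟨v, hv1, hv2⟩ := ih
    obtain ⟨x, hx, hxinv⟩ := (hv2 m le_rfl).step 𝒜 hstd haI hJ hd hf
    have himg : ∀ i ≤ m, (Function.update v m x) '' Set.Iio i = v '' Set.Iio i := by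
      intro i hi
      refine Set.image_congr fun j hj => ?_
      have : j < i := hj
      exact Function.update_of_ne (by omega) _ _
    refine ⟨Function.update v m x, fun i hi => ?_, fun i hi => ?_⟩
    · by_cases e : i = m
      · subst e; simpa using hx
      · rw [Function.update_of_ne e]; exact hv1 i (by omega)
    · by_cases e : i = m + 1
      · subst e
        have : Set.Iio (m + 1) = insert m (Set.Iio m) := by ext j; simp only [Set.mem_Iio, Set.mem_insert_iff]; omega
        rw [this, Set.image_insert_eq, himg m le_rfl, Function.update_self, Set.insert_eq,
          Ideal.span_union, sup_comm]
        exact hxinv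
      · rw [himg i (by omega)]; exact hv2 i (by omega)

/-- A prime containing the irrelevant ideal: degree zero parts of elements outside are units. -/
lemma isUnit_zero_part {K A : Type} [CommRing K] [IsArtinianRing K] [IsLocalRing K]
    [CommRing A] [Algebra K A]
    (𝒜 : ℕ → Submodule K A) [GradedAlgebra 𝒜] (hstd : IsStandardGraded K A 𝒜)
    {p : Ideal A} (hp : p.IsPrime) (hirr : irrelevantIdeal K A 𝒜 ≤ p) {x : A} (hx : x ∉ p) :
    IsUnit (DirectSum.decompose 𝒜 x 0 : A) := by
  have h0 : x - (DirectSum.decompose 𝒜 x 0 : A) ∈ p := by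
    apply hirr
    change _ ∈ HomogeneousIdeal.irrelevant 𝒜
    rw [HomogeneousIdeal.mem_irrelevant_iff, map_sub, GradedRing.proj_apply, GradedRing.proj_apply,
      DirectSum.decompose_coe, DirectSum.of_eq_same, sub_self]
  have h1 : (DirectSum.decompose 𝒜 x 0 : A) ∉ p := fun h => hx (by simpa using add_mem h0 h)
  have h2 : (DirectSum.decompose 𝒜 x 0 : A) ∈ Submodule.span K {(1 : A)} := by
    rw [← hstd.1]; exact (DirectSum.decompose 𝒜 x 0).2
  obtain ⟨r, hr⟩ := Submodule.mem_span_singleton.1 h2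
  rw [← Algebra.algebraMap_eq_smul_one] at hr
  rw [← hr]
  apply IsUnit.map
  by_contra hnu
  apply h1
  rw [← hr]
  have hq : (p.comap (algebraMap K A)).IsPrime := Ideal.IsPrime.comap _
  have hqm : (p.comap (algebraMap K A)).IsMaximal := IsArtinianRing.isMaximal_of_isPrime _
  have : r ∈ p.comap (algebraMap K A) := by
    rw [IsLocalRing.eq_maximalIdeal hqm]
    exact hnu
  exact this

lemma span_eq_of_locGen {K A : Type} [CommRing K] [IsArtinianRing K] [IsLocalRing K]
    [CommRing A] [Algebra K A]
    (𝒜 : ℕ → Submodule K A) [GradedAlgebra 𝒜] (hstd : IsStandardGraded K A 𝒜)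
    {p : Ideal A} (hp : p.IsPrime) (hirr : irrelevantIdeal K A 𝒜 ≤ p) {b a : Ideal A}
    (hb : b.IsHomogeneous 𝒜) (ha : a.IsHomogeneous 𝒜) (h : LocGen p a b 0) : a ≤ b := by
  obtain ⟨x, h1, -, c, hc, h⟩ := h
  obtain rfl : x = ∅ := by simpa using h1
  have hu := isUnit_zero_part 𝒜 hstd hp hirr hc
  obtain ⟨S, hS⟩ := (Ideal.IsHomogeneous.iff_exists 𝒜 a).1 ha
  rw [hS, Ideal.span_le]
  rintro _ ⟨⟨y, e, hy⟩, hyS, rfl⟩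
  have hya : y ∈ a := by rw [hS]; exact Ideal.subset_span ⟨_, hyS, rfl⟩
  have hcy : c * y ∈ b := by simpa using h y hya
  have := hb (0 + e) hcy
  rw [DirectSum.coe_decompose_mul_add_of_right_mem 𝒜 hy] at this
  exact (Ideal.unit_mul_mem_iff_mem _ hu).1 this

/-- A homogeneous ideal locally generated by `k` elements at `p ⊇ R₊` is generated by
`k` homogeneous elements with degrees in decreasing order. -/
lemma exists_sorted_generators {K A : Type} [CommRing K] [IsArtinianRing K] [IsLocalRing K]
    [CommRing A] [IsNoetherianRing A] [Algebra K A]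
    (𝒜 : ℕ → Submodule K A) [GradedAlgebra 𝒜] (hstd : IsStandardGraded K A 𝒜)
    {p : Ideal A} (hp : p.IsPrime) (hirr : irrelevantIdeal K A 𝒜 ≤ p) {I a : Ideal A}
    (haI : a ≤ I) (ha : a.IsHomogeneous 𝒜) (hloc : LocGen p I a 0) {k : ℕ}
    (hk : LocGen p I ⊥ k) :
    ∃ (f : ℕ → A) (d : ℕ → ℕ), Antitone d ∧ (∀ j, f j ∈ 𝒜 (d j)) ∧ (∀ j, k ≤ j → f j = 0) ∧
      Ideal.span (Set.range f) = a := by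
  classical
  obtain ⟨S, hS⟩ := (Ideal.IsHomogeneous.iff_exists 𝒜 a).1 ha
  obtain ⟨F, hF, hFk, hFl⟩ := exists_small_subset hp (IsNoetherian.noetherian I) haI hloc _ hS.symm
    k ⊥ hk
  rw [bot_sup_eq] at hFl
  have hhom : ∀ x ∈ F, ∃ e, x ∈ 𝒜 e := by
    intro x hx
    obtain ⟨⟨y, e, hy⟩, -, rfl⟩ := hF hx
    exact ⟨e, hy⟩
  have hFa : Ideal.span (F : Set A) ≤ a := by rw [hS]; exact Ideal.span_mono hF
  have hspan : Ideal.span (F : Set A) = a := by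
    refine le_antisymm hFa (span_eq_of_locGen 𝒜 hstd hp hirr ?_ ha ?_)
    · exact Ideal.homogeneous_span 𝒜 _ hhom
    · rw [locGen_zero] at hFl ⊢
      exact fun hh => hFl ((Submodule.colon_mono le_rfl haI).trans hh)
  choose! deg hdeg using hhom
  let e : Fin F.card ≃ F := F.equivFin.symm
  let D : Fin F.card → ℕᵒᵈ := fun i => OrderDual.toDual (deg (e i))
  let σ := Tuple.sort D
  have hmono : Monotone (D ∘ σ) := Tuple.monotone_sort D
  refine ⟨fun j => if h : j < F.card then (e (σ ⟨j, h⟩) : A) else 0,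
    fun j => if h : j < F.card then deg (e (σ ⟨j, h⟩)) else 0, ?_, ?_, ?_, ?_⟩
  · intro i j hij
    by_cases hj : j < F.card
    · have hi : i < F.card := by omega
      simp only [hi, hj, dif_pos]
      exact hmono (show (⟨i, hi⟩ : Fin F.card) ≤ ⟨j, hj⟩ from hij)
    · simp [hj]
  · intro j
    by_cases hj : j < F.card
    · simp only [hj, dif_pos]
      exact hdeg _ (e _).2
    · simp [hj]
  · intro j hj
    have : ¬ j < F.card := by omega
    simp [this]
  · rw [← hspan]
    apply le_antisymm
    · rw [Ideal.span_le]
      rintro _ ⟨j, rfl⟩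
      by_cases hj : j < F.card
      · simp only [hj, dif_pos]
        exact Ideal.subset_span (e _).2
      · simp [hj]
    · refine Ideal.span_mono fun x hx => ?_
      refine ⟨σ.symm (e.symm ⟨x, hx⟩), ?_⟩
      simp

lemma idealHeight_prime {A : Type} [CommRing A] (p : PrimeSpectrum A) :
    idealHeight A p.asIdeal = Order.height p :=
  le_antisymm (iInf₂_le p le_rfl) (le_iInf₂ fun _ hq => Order.height_mono hq)

lemma exists_of_idealMu_le {A : Type} [CommRing A] {I : Ideal A} {n : ℕ} (h : idealMu A I ≤ n) :
    ∃ x : Finset A, x.card ≤ n ∧ Ideal.span (x : Set A) = I := by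
  unfold idealMu at h
  set S := {n : ℕ∞ | ∃ s : Finset A, (s.card : ℕ∞) = n ∧ Ideal.span (s : Set A) = I} with hS
  rcases S.eq_empty_or_nonempty with he | hne
  · rw [he, sInf_empty] at h
    exact absurd h (by simp)
  · obtain ⟨x, hx, hxI⟩ := csInf_mem hne
    refine ⟨x, ?_, hxI⟩
    rw [← hx] at h
    exact_mod_cast h

lemma idealMu_le_of_span {A : Type} [CommRing A] {I : Ideal A} {n : ℕ} (x : Finset A)
    (hx : x.card ≤ n) (h : Ideal.span (x : Set A) = I) : idealMu A I ≤ n :=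
  le_trans (b := (x.card : ℕ∞)) (sInf_le ⟨x, rfl, h⟩) (by exact_mod_cast hx)

lemma locGen_of_localization {A : Type} [CommRing A] [IsNoetherianRing A] (p : PrimeSpectrum A)
    {I : Ideal A} {n : ℕ} (h : idealMu (Localization.AtPrime p.asIdeal)
      (I.map (algebraMap A (Localization.AtPrime p.asIdeal))) ≤ n) : LocGen p.asIdeal I ⊥ n := by
  classical
  obtain ⟨x, hxn, hx⟩ := exists_of_idealMu_le h
  have hrep : ∀ z ∈ x, ∃ y ∈ I, ∃ t ∈ p.asIdeal.primeCompl,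
      z * algebraMap A (Localization.AtPrime p.asIdeal) t = algebraMap A _ y := by
    intro z hz
    have : z ∈ I.map (algebraMap A (Localization.AtPrime p.asIdeal)) := hx ▸ Ideal.subset_span hz
    obtain ⟨⟨y, t⟩, e⟩ := (IsLocalization.mem_map_algebraMap_iff p.asIdeal.primeCompl _).1 this
    exact ⟨y, y.2, t, t.2, e⟩
  choose! y hyI t ht e using hrep
  have hle : I.map (algebraMap A (Localization.AtPrime p.asIdeal)) ≤
      (Ideal.span ((x.image y : Finset A) : Set A)).map
        (algebraMap A (Localization.AtPrime p.asIdeal)) := by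
    rw [← hx, Ideal.span_le]
    intro z hz
    have hu := IsLocalization.map_units (Localization.AtPrime p.asIdeal)
      (⟨t z, ht z hz⟩ : p.asIdeal.primeCompl)
    refine (Ideal.mul_unit_mem_iff_mem _ hu).1 ?_
    change z * algebraMap A (Localization.AtPrime p.asIdeal) (t z) ∈ _
    rw [e z hz]
    exact Ideal.mem_map_of_mem _ (Ideal.subset_span (by
      simp only [Finset.coe_image]; exact ⟨z, hz, rfl⟩))
  obtain ⟨c, hc, hcI⟩ := exists_common_denom (K := Ideal.span ((x.image y : Finset A) : Set A))
    p.isPrime (IsNoetherian.noetherian I) (by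
      intro w hw
      have := hle (Ideal.mem_map_of_mem _ hw)
      obtain ⟨c, hc, h⟩ := (IsLocalization.algebraMap_mem_map_algebraMap_iff
        p.asIdeal.primeCompl (Localization.AtPrime p.asIdeal) _ _).1 this
      exact ⟨c, hc, h⟩)
  refine ⟨x.image y, Finset.card_image_le.trans hxn, ?_, c, hc, fun w hw => ?_⟩
  · intro w hw
    obtain ⟨z, hz, rfl⟩ := Finset.mem_image.1 hw
    exact hyI z hz
  · rw [sup_bot_eq]; exact hcI w hw

end ANHelpers

/-- **(Lemma 4.4 / `Lulrich`)** Let `R` be a standard positively graded Noetherian ring with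
`(R₀, 𝔪₀)` Artinian local with infinite residue field, and let `I` be a homogeneous ideal
of height `g` satisfying `G_s`.  If `J = 𝔞 : I` is an `s`-residual intersection of `I`
with `𝔞` homogeneous, then `𝔞` has an A-N homogeneous generating set: a homogeneous
generating set `a_1, …, a_s` such that `(a_1, …, a_i) : I` is an `i`-residual intersection
of `I` for every `g ≤ i ≤ s`. -/
theorem exists_AN_homogeneous_generating_set
    (R₀ : Type) [CommRing R₀] [IsArtinianRing R₀] [IsLocalRing R₀]
    [Infinite (IsLocalRing.ResidueField R₀)]
    (R : Type) [CommRing R] [IsNoetherianRing R] [Algebra R₀ R]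
    (𝒜 : ℕ → Submodule R₀ R) [GradedAlgebra 𝒜] (hstd : IsStandardGraded R₀ R 𝒜)
    (g : ℕ) (I : Ideal R) (hIhom : I.IsHomogeneous 𝒜)
    (hht : idealHeight R I = (g : ℕ∞))
    (s : ℕ) (hs : g ≤ s)
    -- `I` satisfies `G_s`
    (hGs : ∀ p : PrimeSpectrum R, I ≤ p.asIdeal → idealHeight R p.asIdeal < (s : ℕ∞) →
      idealMu (Localization.AtPrime p.asIdeal)
          (I.map (algebraMap R (Localization.AtPrime p.asIdeal))) ≤
        idealHeight R p.asIdeal)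
    (a J : Ideal R) (hahom : a.IsHomogeneous 𝒜)
    (hres : IsResidualIntersection R a I J s) :
    ∃ aa : Fin s → R,
      (∀ i, ∃ d : ℕ, aa i ∈ 𝒜 d) ∧
      Ideal.span (Set.range aa) = a ∧
      ∀ i : ℕ, g ≤ i → i ≤ s →
        IsResidualIntersection R (Ideal.span (aa '' {j : Fin s | (j : ℕ) < i})) I
          ((Ideal.span (aa '' {j : Fin s | (j : ℕ) < i})).colon I) i := by
  classical
  obtain ⟨haI, hJeq, hamu, hJht⟩ := hres
  have hJ : ∀ p : PrimeSpectrum R, Order.height p < s → LocGen p.asIdeal I a 0 := by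
    intro p hp
    rw [locGen_zero, ← hJeq]
    intro hle
    exact absurd (hJht.trans (iInf₂_le p hle)) (not_le.2 hp)
  have hG : ∀ p : PrimeSpectrum R, I ≤ p.asIdeal → ∀ h : ℕ, Order.height p = h → h < s →
      LocGen p.asIdeal I ⊥ h := by
    intro p hIp h hh hhs
    apply locGen_of_localization
    have := hGs p hIp (by rw [idealHeight_prime, hh]; exact_mod_cast hhs)
    rwa [idealHeight_prime, hh] at this
  have hItop : I ≠ ⊤ := by
    rintro rfl
    have : idealHeight R ⊤ = ⊤ := by
      refine eq_top_iff.2 (le_iInf₂ fun p hp => ?_)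
      exact absurd (top_le_iff.1 hp) p.isPrime.ne_top
    rw [this] at hht
    exact absurd hht.symm (ENat.natCast_ne_top g)
  -- a prime containing the irrelevant ideal of minimal height
  have hirrtop : irrelevantIdeal R₀ R 𝒜 ≠ ⊤ := by
    intro h
    have h1 : (1 : R) ∈ HomogeneousIdeal.irrelevant 𝒜 := by
      change (1 : R) ∈ irrelevantIdeal R₀ R 𝒜
      rw [h]; trivial
    rw [HomogeneousIdeal.mem_irrelevant_iff, GradedRing.proj_apply,
      DirectSum.decompose_of_mem_same 𝒜 SetLike.GradedOne.one_mem] at h1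
    apply hItop
    rw [Ideal.eq_top_iff_one, h1]
    exact zero_mem _
  obtain ⟨mm, hmm, hmirr⟩ := Ideal.exists_le_maximal _ hirrtop
  let T : Set (PrimeSpectrum R) := {p | irrelevantIdeal R₀ R 𝒜 ≤ p.asIdeal}
  have hT : T.Nonempty := ⟨⟨mm, hmm.isPrime⟩, hmirr⟩
  obtain ⟨p0, hp0, hp0min⟩ : ∃ p0 ∈ T, ∀ p ∈ T, Order.height p0 ≤ Order.height p := by
    obtain ⟨p0, hp0, h⟩ := csInf_mem (hT.image Order.height)
    exact ⟨p0, hp0, fun p hp => h ▸ csInf_le' ⟨p, hp, rfl⟩⟩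
  have hp0' : irrelevantIdeal R₀ R 𝒜 ≤ p0.asIdeal := hp0
  obtain ⟨n, hns, hnT, f, d, hd, hf, hf0, hfa⟩ : ∃ n : ℕ, n ≤ s ∧
      (∀ p ∈ T, Order.height p < s → (n : ℕ∞) ≤ Order.height p) ∧
      ∃ (f : ℕ → R) (d : ℕ → ℕ), Antitone d ∧ (∀ j, f j ∈ 𝒜 (d j)) ∧ (∀ j, n ≤ j → f j = 0) ∧
      Ideal.span (Set.range f) = a := by
    by_cases hlt : Order.height p0 < s
    · obtain ⟨h, hh⟩ := ENat.ne_top_iff_exists.1 (ne_top_of_lt hlt)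
      have hhs : h < s := by rw [← hh] at hlt; exact_mod_cast hlt
      refine ⟨h, hhs.le, fun p hp _ => hh ▸ hp0min p hp, ?_⟩
      have hIp : I ≤ p0.asIdeal := by
        by_contra hcon
        obtain ⟨x, hx, hxp⟩ := Set.not_subset.1 hcon
        exact hItop (Ideal.eq_top_of_isUnit_mem _ (hIhom 0 hx)
          (isUnit_zero_part 𝒜 hstd p0.isPrime hp0' hxp))
      exact exists_sorted_generators 𝒜 hstd p0.isPrime hp0' haI hahom (hJ p0 hlt)
        (hG p0 hIp h hh.symm hhs)
    · refine ⟨s, le_rfl, fun p hp hps => absurd ((hp0min p hp).trans_lt hps) hlt, ?_⟩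
      have h1 : (1 : R) ∉ p0.asIdeal := fun h => p0.isPrime.ne_top ((Ideal.eq_top_iff_one _).2 h)
      obtain ⟨x, hx, hxa⟩ := exists_of_idealMu_le hamu
      refine exists_sorted_generators 𝒜 hstd p0.isPrime hp0' le_rfl hahom
        ⟨∅, by simp, by simp, 1, h1, fun y hy => by simpa using hy⟩
        ⟨x, hx, hxa ▸ Ideal.subset_span, 1, h1, fun y hy => by simpa [hxa] using hy⟩
  have hzero : ∀ i, n ≤ i → Ideal.span (f '' Set.Ici i) = ⊥ := by
    intro i hi
    rw [Ideal.span_eq_bot]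
    rintro _ ⟨j, hj, rfl⟩
    exact hf0 j (hi.trans hj)
  have h0 : ANInv 𝒜 I a s f 0 ⊥ := by
    refine ⟨?_, fun p _ h hh hhs => ?_⟩
    · rw [bot_sup_eq, ← hfa, ← Set.image_univ]
      congr 2
      ext; simp
    · by_cases hIp : I ≤ p.asIdeal
      · exact (hG p hIp h hh hhs).mono (by omega) le_rfl le_rfl
      · obtain ⟨x, hx, hxp⟩ := Set.not_subset.1 hIp
        refine ⟨{x}, by simp, by simpa using hx, x, hxp, fun y _ => ?_⟩
        exact Ideal.mem_sup_left (Ideal.mul_mem_right _ _ (Ideal.subset_span (by simp)))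
  obtain ⟨v, hv, hinv⟩ := exists_AN_seq 𝒜 hstd haI hJ hd hf h0 s
  have himg : ∀ i ≤ s, (fun j : Fin s => v j) '' {j : Fin s | (j : ℕ) < i} = v '' Set.Iio i := by
    intro i hi
    ext x
    constructor
    · rintro ⟨j, hj, rfl⟩; exact ⟨j, hj, rfl⟩
    · rintro ⟨j, hj, rfl⟩
      have hj' : j < i := hj
      exact ⟨⟨j, by omega⟩, hj, rfl⟩
  have hspan : ∀ i ≤ s, n ≤ i → Ideal.span (v '' Set.Iio i) = a := by
    intro i hi hni
    have := (hinv i hi).1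
    rwa [hzero i hni, sup_bot_eq] at this
  refine ⟨fun j => v j, fun i => ⟨d i, hv i i.2⟩, ?_, ?_⟩
  · rw [← hspan s le_rfl hns, ← himg s le_rfl]
    congr 1
    ext x; simp
  · intro i _ his
    rw [himg i his]
    refine ⟨?_, rfl, ?_, ?_⟩
    · refine le_trans ?_ haI
      rw [← (hinv i his).1]
      exact le_sup_left
    · refine idealMu_le_of_span ((Finset.range i).image v) (Finset.card_image_le.trans (by simp)) ?_
      congr 1
      ext x; simp
    · refine le_iInf₂ fun p hp => ?_
      by_contra hlt
      rw [not_le] at hlt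
      have hlts : Order.height p < s := hlt.trans_le (by exact_mod_cast his)
      obtain ⟨h, hh⟩ := ENat.ne_top_iff_exists.1 (ne_top_of_lt hlt)
      have hhi : h < i := by rw [← hh] at hlt; exact_mod_cast hlt
      by_cases hirr : irrelevantIdeal R₀ R 𝒜 ≤ p.asIdeal
      · have hn := hnT p hirr hlts
        rw [← hh] at hn
        have hn' : n ≤ h := by exact_mod_cast hn
        rw [hspan i his (by omega)] at hp
        exact locGen_zero.1 (hJ p hlts) hp
      · have := (hinv i his).2 p hirr h hh.symm (by omega)
        rw [show h + 1 - i = 0 by omega] at this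
        exact locGen_zero.1 this hp

end
end
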